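/- Let k ≥ 6 be an integer. If a simple graph has k edges and at most k - 1 vertices (counting only vertices incident to an edge), then it contains a cycle of length at most ⌊2k/3⌋; that is, its girth is at most ⌊2k/3⌋. -/

import Mathlib

open Finset

/-!
Let `C` be a shortest cycle, of length `g`, and let `H` be the graph `G` without the edges of `C`;
it has `m = k - g` edges. Suppose `3 * g > 2 * k`, i.e. `2 * m < g`.

A cycle in `H` would have length at most `m < g`, so `H` is a forest. A forest with `m` edges has
`|V| - m` components, so at most `|V| - m` vertices can be pairwise unreachable in it
(`card_edgeSet_add_card_le`). The `g` vertices of `C` together with the isolated vertices of `G` are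
more than that, because `G` has fewer non-isolated vertices than edges; as isolated vertices reach
nothing else, two distinct vertices `x`, `y` of `C` are joined by a path in `H`. This path has length
at most `m`, the shorter arc of `C` from `y` to `x` has length at most `g / 2`, and they share no
edge, so together they form a circuit of length at most `m + g / 2 < g`, which contains a cycle
shorter than `C`.
-/

namespace SimpleGraph

variable {V : Type*}

/-- In a forest, the edges and any set of pairwise unreachable vertices together number at most the
vertices. Deleting an edge of a forest splits a component, so the set of representatives can
be enlarged by one endpoint of that edge; this gives the induction step. -/
lemma card_edgeSet_add_card_le [Fintype V] [DecidableEq V] (n : ℕ) :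
    ∀ (H : SimpleGraph V) (T : Finset V), H.IsAcyclic → H.edgeSet.ncard = n →
      (∀ x ∈ T, ∀ y ∈ T, H.Reachable x y → x = y) → n + T.card ≤ Fintype.card V := by
  induction n with
  | zero =>
    intro H T _ _ _
    simpa using Finset.card_le_univ T
  | succ n ih =>
    intro H T hH hn hT
    obtain ⟨e, he⟩ : H.edgeSet.Nonempty := by
      apply Set.nonempty_of_ncard_ne_zero
      omega
    induction e using Sym2.ind with
    | _ u v =>
    have huv : H.Adj u v := he
    have hle : H.deleteEdges {s(u, v)} ≤ H := H.deleteEdges_le _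
    have hbr : ¬ (H.deleteEdges {s(u, v)}).Reachable u v := by
      have := isAcyclic_iff_forall_adj_isBridge.1 hH huv
      rw [isBridge_iff] at this
      exact this
    have hcard : (H.deleteEdges {s(u, v)}).edgeSet.ncard = n := by
      rw [edgeSet_deleteEdges, Set.ncard_sdiff_singleton_of_mem he, hn]
      rfl
    -- An endpoint which no vertex of `T` reaches without the edge can be added to `T`.
    have key : ∀ w, (∀ t ∈ T, ¬ (H.deleteEdges {s(u, v)}).Reachable t w) →
        n + 1 + T.card ≤ Fintype.card V := by
      intro w hw
      have hwT : w ∉ T := fun h => hw w h (Reachable.refl _)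
      have := ih (H.deleteEdges {s(u, v)}) (insert w T) (hH.anti hle) hcard (by
        intro x hx y hy hxy
        rw [Finset.mem_insert] at hx hy
        rcases hx with rfl | hx <;> rcases hy with rfl | hy
        · rfl
        · exact absurd hxy.symm (hw y hy)
        · exact absurd hxy (hw x hx)
        · exact hT x hx y hy (hxy.mono hle))
      rw [Finset.card_insert_of_notMem hwT] at this
      omega
    by_cases h : ∃ t ∈ T, (H.deleteEdges {s(u, v)}).Reachable t u
    · obtain ⟨t, ht, htu⟩ := h
      refine key v fun t' ht' htv => hbr ?_
      have : t = t' := hT t ht t' ht'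
        (((htu.mono hle).trans huv.reachable).trans (htv.mono hle).symm)
      subst this
      exact htu.symm.trans htv
    · push Not at h
      exact key u h

/-- Any two vertices of a closed trail are joined along it by a trail of at most half
its length. -/
lemma exists_short_arc [DecidableEq V] {G : SimpleGraph V} {a x y : V} (C : G.Walk a a)
    (hC : C.IsTrail) (hx : x ∈ C.support) (hy : y ∈ C.support) :
    ∃ q : G.Walk y x, q.IsTrail ∧ 2 * q.length ≤ C.length ∧ ∀ e ∈ q.edges, e ∈ C.edges := by
  have hyD : y ∈ (C.rotate x hx).support := (Walk.mem_support_rotate_iff C x hx).2 hy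
  have htr : (C.rotate x hx).IsTrail := (Walk.isTrail_rotate hx).2 hC
  have hlen : (C.rotate x hx).length = C.length := Walk.length_rotate C x hx
  have hed : ∀ e, e ∈ (C.rotate x hx).edges → e ∈ C.edges :=
    fun e he => (Walk.rotate_edges C x hx).mem_iff.1 he
  generalize C.rotate x hx = D at hyD htr hlen hed
  have hsum : (D.takeUntil y hyD).length + (D.dropUntil y hyD).length = D.length := by
    rw [← Walk.length_append, Walk.take_spec]
  by_cases h : 2 * (D.takeUntil y hyD).length ≤ C.length
  · refine ⟨(D.takeUntil y hyD).reverse, (htr.takeUntil hyD).reverse, by simpa using h, ?_⟩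
    intro e he
    rw [Walk.edges_reverse, List.mem_reverse] at he
    exact hed e (D.edges_takeUntil_subset_edges hyD he)
  · refine ⟨D.dropUntil y hyD, htr.dropUntil hyD, by omega, ?_⟩
    intro e he
    exact hed e (D.edges_dropUntil_subset_edges hyD he)

/-- The bound for the extended girth, which is `⊤` on forests; in particular `G` has a cycle. -/
lemma egirth_le_two_mul_div_three [Fintype V] [DecidableEq V] (G : SimpleGraph V)
    [DecidableRel G.Adj] (k : ℕ) (hk : 6 ≤ k) (hedges : G.edgeFinset.card = k)
    (hverts : (Finset.univ.filter fun v : V => 0 < G.degree v).card ≤ k - 1) :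
    G.egirth ≤ ((2 * k / 3 : ℕ) : ℕ∞) := by
  classical
  have hcardV : (univ.filter fun v : V => 0 < G.degree v).card +
      (univ.filter fun v : V => ¬ 0 < G.degree v).card = Fintype.card V := by
    rw [Finset.card_filter_add_card_filter_not, Finset.card_univ]
  have hGn : G.edgeSet.ncard = k := by
    rw [← hedges, ← coe_edgeFinset, Set.ncard_coe_finset]
  have hiso : ∀ x y, ¬ 0 < G.degree x → G.Reachable x y → x = y := by
    rintro x y hx ⟨p⟩
    cases p with
    | nil => rfl
    | cons h _ => exact absurd ((G.degree_pos_iff_exists_adj x).2 ⟨_, h⟩) hx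
  have hcyc : ¬ G.IsAcyclic := by
    intro hG
    have := card_edgeSet_add_card_le k G (univ.filter fun v : V => ¬ 0 < G.degree v) hG hGn
      (fun x hx y _ hxy => hiso x y (Finset.mem_filter.1 hx).2 hxy)
    omega
  obtain ⟨a, C, hC, hg⟩ := exists_egirth_eq_length.2 hcyc
  rw [hg, Nat.cast_le]
  by_contra! hlt
  have hmin : ∀ {b : V} {w : G.Walk b b}, w.IsCircuit → C.length ≤ w.length := by
    intro b w hw
    have := hw.egirth_le_length
    rw [hg] at this
    exact_mod_cast this
  set S : Set (Sym2 V) := (C.edges.toFinset : Set (Sym2 V)) with hS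
  set H := G.deleteEdges S with hHdef
  have hle : H ≤ G := G.deleteEdges_le _
  have hSsub : S ⊆ G.edgeSet := by
    intro e he
    exact C.edges_subset_edgeSet (by simpa [hS] using he)
  have hScard : S.ncard = C.length := by
    rw [hS, Set.ncard_coe_finset, List.toFinset_card_of_nodup hC.isTrail.edges_nodup,
      Walk.length_edges]
  have hCk : C.length ≤ k := by
    rw [← hGn, ← hScard]
    exact Set.ncard_le_ncard hSsub
  have hHn : H.edgeSet.ncard = k - C.length := by
    rw [hHdef, edgeSet_deleteEdges, Set.ncard_sdiff hSsub, hGn, hScard]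
  have htrail : ∀ {b c : V} {w : H.Walk b c}, w.IsTrail → w.length ≤ k - C.length := by
    intro b c w hw
    have := hw.length_le_card_edgeFinset
    rwa [← Set.ncard_coe_finset, coe_edgeFinset, hHn] at this
  have hacyc : H.IsAcyclic := by
    intro b w hw
    have h1 := htrail hw.isTrail
    have h2 := hmin (hw.mapLe hle).isCircuit
    rw [Walk.length_mapLe] at h2
    omega
  have hsupp : C.length ≤ C.support.toFinset.card := by
    have h1 : C.support.tail.toFinset ⊆ C.support.toFinset := by
      intro v hv
      rw [List.mem_toFinset] at hv ⊢
      exact List.mem_of_mem_tail hv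
    have h2 := Finset.card_le_card h1
    rw [List.toFinset_card_of_nodup hC.support_nodup, List.length_tail, Walk.length_support] at h2
    omega
  have hdeg : ∀ x ∈ C.support, 0 < G.degree x := by
    intro x hx
    by_contra hx0
    -- The whole support would then be `{x}`, but `C` visits at least three vertices.
    have hsub : C.support.toFinset ⊆ {x} := by
      intro y hy
      rw [List.mem_toFinset] at hy
      rw [Finset.mem_singleton]
      exact (hiso x y hx0 ((C.takeUntil x hx).reachable.symm.trans
        (C.takeUntil y hy).reachable)).symm
    have h1 := Finset.card_le_card hsub
    rw [Finset.card_singleton] at h1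
    have h3 := hC.three_le_length
    omega
  obtain ⟨x, hx, y, hy, hxy, hne⟩ :
      ∃ x ∈ C.support, ∃ y ∈ C.support, H.Reachable x y ∧ x ≠ y := by
    by_contra! hno
    have hdisj : Disjoint C.support.toFinset (univ.filter fun v : V => ¬ 0 < G.degree v) := by
      rw [Finset.disjoint_left]
      intro x hx hx'
      exact (Finset.mem_filter.1 hx').2 (hdeg x (List.mem_toFinset.1 hx))
    have := card_edgeSet_add_card_le _ H
      (C.support.toFinset ∪ univ.filter fun v : V => ¬ 0 < G.degree v) hacyc hHn (by
        intro x hx y hy hxy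
        rw [Finset.mem_union, List.mem_toFinset, Finset.mem_filter] at hx hy
        rcases hx with hx | hx
        · rcases hy with hy | hy
          · exact hno x hx y hy hxy
          · exact (hiso y x hy.2 (hxy.mono hle).symm).symm
        · exact hiso x y hx.2 (hxy.mono hle))
    rw [Finset.card_union_of_disjoint hdisj] at this
    omega
  obtain ⟨p, hp⟩ := hxy.exists_isPath
  obtain ⟨q, hq, hqlen, hqC⟩ := exists_short_arc C hC.isTrail hx hy
  have hplen := htrail hp.isTrail
  have hcirc : ((p.mapLe hle).append q).IsCircuit := by
    refine ⟨⟨?_⟩, ?_⟩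
    · rw [Walk.edges_append, List.nodup_append']
      refine ⟨(hp.mapLe hle).isTrail.edges_nodup, hq.edges_nodup, ?_⟩
      intro e he1 he2
      rw [Walk.edges_mapLe_eq_edges] at he1
      have h1 := p.edges_subset_edgeSet he1
      rw [hHdef, edgeSet_deleteEdges] at h1
      exact h1.2 (by simpa [hS] using hqC e he2)
    · intro h0
      have h1 := congrArg Walk.length h0
      rw [Walk.length_append, Walk.length_nil] at h1
      exact hne (Walk.eq_of_length_eq_zero (p := q) (by omega)).symm
  have h1 := hmin hcirc
  rw [Walk.length_append, Walk.length_mapLe] at h1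
  omega

end SimpleGraph

/-- If a simple graph has `k ≥ 6` edges and at most `k - 1` vertices incident to an edge,
then its girth is at most `⌊2k/3⌋`. -/
theorem statement9 {V : Type*} [Fintype V] [DecidableEq V] (G : SimpleGraph V)
    [DecidableRel G.Adj] (k : ℕ) (hk : 6 ≤ k) (hedges : G.edgeFinset.card = k)
    (hverts : (Finset.univ.filter fun v : V => 0 < G.degree v).card ≤ k - 1) :
    G.girth ≤ ((2 * k / 3 : ℕ) : ℕ∞) :=
  (ENat.natCast_toNat_le_self _).trans
    (G.egirth_le_two_mul_div_three k hk hedges hverts)
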